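/- arXiv:2507.14070 — 4 statements merged into one kernel-verified Lean document; each statement's English description precedes it below -/
import Mathlib

section
/- Let b, t, γ be positive integers with 2t < b. Let F be a finite set and let f : Σ_2^b → F be a one-burst-t-deletion syndrome function. Fix σ_0, σ_1 ∈ F and for c ∈ {0,1} define S^(c) = {s ∈ Σ_2^b : f(s) = σ_c, s_1 = c, s_{t+1} ≠ s_{2t}, s_{b−t+1} = s_b}. Let C ⊆ Σ_2^{bγ} be the set of all concatenations x_1 x_2 ⋯ x_γ such that x_1 ∈ S^(0) and, for each i ∈ [2,γ], x_i ∈ S^(1) if the last bit of x_{i−1} equals 0 and x_i ∈ S^(0) if the last bit of x_{i−1} equals 1. Then C is a segmented burst-of-t-deletions error-correcting code: for any two distinct x, x′ ∈ C, B^D_{γ,t}(x) ∩ B^D_{γ,t}(x′) = ∅. -/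
/-- The one-burst-`t`-deletion ball `B_t^D(x)`: all sequences obtained from `x` by
deleting `t` consecutive symbols. -/
def burstDelBall {q : ℕ} (t : ℕ) (x : List (Fin q)) : Set (List (Fin q)) :=
  {y | ∃ i, i + t ≤ x.length ∧ y = x.take i ++ x.drop (i + t)}

/-- The `i`-th (0-indexed) segment of length `b` of `x`. -/
def seg {q : ℕ} (b : ℕ) (x : List (Fin q)) (i : ℕ) : List (Fin q) :=
  (x.drop (i * b)).take b

/-- The segmented burst-deletion ball `B^D_{γ,t}(x)`: concatenations `z_1 ⋯ z_γ`
where each `z_i` is either the `i`-th segment of `x` or obtained from it by one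
burst of `t` deletions. -/
def segBall {q : ℕ} (b t γ : ℕ) (x : List (Fin q)) : Set (List (Fin q)) :=
  {y | ∃ z : Fin γ → List (Fin q),
      (∀ i : Fin γ, z i = seg b x i ∨ z i ∈ burstDelBall t (seg b x i)) ∧
      y = (List.ofFn z).flatten}

/-- `f` is a one-burst-`t`-deletion syndrome function on length-`b` sequences. -/
def IsSyndrome {q : ℕ} (b t : ℕ) {F : Type*} (f : List (Fin q) → F) : Prop :=
  ∀ u v : List (Fin q), u.length = b → v.length = b → u ≠ v → f u = f v →
    burstDelBall t u ∩ burstDelBall t v = ∅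

/-!
Read the two transmitted words from left to right. As long as the received segments have been cut
at the same places, consecutive segments agree: equal received lengths leave either no deletion or
one burst in both segments, and the syndrome function settles the second case. The cuts can only
diverge if one segment `u` arrives intact and the other segment `u'` suffers a burst. Then the
received part of `u'` is `u` without its last `t` symbols, so `u = u'`, and the missing `t` symbols
of `u`, which begin and end with the same symbol `d`, begin the rest of the other received word.
But the segment following `u'` starts with a symbol other than `d`, and a burst removing that
symbol exposes `t` symbols whose first and last differ.
-/

section BurstDeletion

variable {q b t : ℕ} {F : Type*} {f : List (Fin q) → F} {u v z s : List (Fin q)} {c d : Fin q}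

theorem length_add_of_mem_burstDelBall (h : z ∈ burstDelBall t u) : z.length + t = u.length := by
  obtain ⟨i, hi, rfl⟩ := h
  simp only [List.length_append, List.length_take, List.length_drop]
  omega

theorem mem_burstDelBall_append : z ∈ burstDelBall s.length (z ++ s) :=
  ⟨z.length, by simp, by simp⟩

theorem IsSyndrome.eq_of_mem_burstDelBall (hf : IsSyndrome b t f) (hu : u.length = b)
    (hv : v.length = b) (huv : f u = f v) (hzu : z ∈ burstDelBall t u)
    (hzv : z ∈ burstDelBall t v) : u = v := by
  by_contra hne
  exact (hf u v hu hv hne huv).subset ⟨hzu, hzv⟩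

/-- `z` can be received when the segment `u` is transmitted: at most one burst of `t` deletions
occurs. -/
def IsReceived (t : ℕ) (z u : List (Fin q)) : Prop :=
  z = u ∨ z ∈ burstDelBall t u

theorem IsReceived.length_le_add (h : IsReceived t z u) : u.length ≤ z.length + t := by
  obtain rfl | h := h
  · exact Nat.le_add_right _ _
  · exact (length_add_of_mem_burstDelBall h).ge

theorem IsReceived.eq_of_getElem?_eq (ht : 0 < t) (h : IsReceived t z u) (hc : u[0]? = some c)
    (hu : u[t]? ≠ u[2 * t - 1]?) (h_first : z[0]? = some d) (h_last : z[t - 1]? = some d) :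
    d = c := by
  have of_head_eq (h0 : z[0]? = u[0]?) : d = c :=
    Option.some_injective _ (h_first.symm.trans (h0.trans hc))
  obtain rfl | ⟨i, hi, rfl⟩ := h
  · exact of_head_eq rfl
  obtain rfl | hi0 := Nat.eq_zero_or_pos i
  · have h_index : t + (t - 1) = 2 * t - 1 := by omega
    simp only [List.take_zero, List.nil_append, List.getElem?_drop, zero_add, add_zero,
      h_index] at h_first h_last
    exact absurd (h_first.trans h_last.symm) hu
  · apply of_head_eq
    rw [List.getElem?_append_left (by simp only [List.length_take]; omega),
      List.getElem?_take_of_lt hi0]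

end BurstDeletion

section Segments

variable {q b t : ℕ} {us zs : List (List (Fin q))}

theorem seg_flatten (h : ∀ u ∈ us, u.length = b) {i : ℕ} (hi : i < us.length) :
    seg b us.flatten i = us[i] := by
  have h_lengths : us.map List.length = List.replicate us.length b :=
    List.eq_replicate_iff.2 ⟨List.length_map _, by simpa using h⟩
  have h_drop : us.flatten.drop (i * b) = (us.drop i).flatten := by
    rw [← List.drop_sum_flatten, h_lengths, List.take_replicate, List.sum_replicate,
      min_eq_left hi.le, smul_eq_mul]
  rw [seg, h_drop, List.drop_eq_getElem_cons hi, List.flatten_cons,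
    List.take_left' (h _ (List.getElem_mem hi))]

theorem exists_isReceived_of_mem_segBall {y : List (Fin q)} (h : ∀ u ∈ us, u.length = b)
    (hy : y ∈ segBall b t us.length us.flatten) :
    ∃ zs, List.Forall₂ (IsReceived t) zs us ∧ y = zs.flatten := by
  obtain ⟨z, hz, rfl⟩ := hy
  refine ⟨List.ofFn z, List.forall₂_iff_get.2 ⟨List.length_ofFn, fun i _ hi => ?_⟩, rfl⟩
  simpa only [IsReceived, seg_flatten h hi, List.get_eq_getElem, List.getElem_ofFn] using hz ⟨i, hi⟩

end Segments

section SegmentChain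

variable {q : ℕ} {S : Fin q → Set (List (Fin q))} {φ : Fin q → Fin q} {c d : Fin q}
  {u : List (Fin q)} {us : List (List (Fin q))}

/-- The successive segments of a codeword: the first one lies in `S c`, and a segment that follows
a segment ending in `d` lies in `S (φ d)`. -/
def IsSegmentChain (S : Fin q → Set (List (Fin q))) (φ : Fin q → Fin q) (c : Fin q)
    (us : List (List (Fin q))) : Prop :=
  (∀ u ∈ us.head?, u ∈ S c) ∧ us.IsChain fun u v => ∀ d, u.getLast? = some d → v ∈ S (φ d)

theorem IsSegmentChain.head_mem (h : IsSegmentChain S φ c (u :: us)) : u ∈ S c :=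
  h.1 u rfl

theorem IsSegmentChain.tail (h : IsSegmentChain S φ c (u :: us)) (hd : u.getLast? = some d) :
    IsSegmentChain S φ (φ d) us :=
  ⟨fun _ hv => h.2.rel_head? hv d hd, h.2.tail⟩

theorem isSegmentChain_ofFn {γ : ℕ} (hγ : 0 < γ) {z : Fin γ → List (Fin q)}
    (h_head : z ⟨0, hγ⟩ ∈ S c)
    (h_next : ∀ i : Fin γ, 0 < i.val → ∀ d : Fin q,
      (z ⟨i.val - 1, Nat.lt_of_le_of_lt (Nat.pred_le _) i.isLt⟩).getLast? = some d →
        z i ∈ S (φ d)) :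
    IsSegmentChain S φ c (List.ofFn z) := by
  refine ⟨?_, List.isChain_ofFn.2 fun i hi => h_next ⟨i + 1, hi⟩ i.succ_pos⟩
  obtain ⟨n, rfl⟩ := Nat.exists_eq_succ_of_ne_zero hγ.ne'
  simpa using h_head

end SegmentChain

section MarkedSegments

variable {q b t : ℕ} {F : Type*} {f : List (Fin q) → F} {σ : Fin q → F} {φ : Fin q → Fin q}
  {c d : Fin q} {u u' z' w : List (Fin q)} {us us' zs zs' : List (List (Fin q))}

/-- The set `S^(c)` of segments of length `b` with first symbol `c` and syndrome `σ c` that satisfy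
the two boundary constraints. Positions are 0-indexed. -/
def markedSegments (b t : ℕ) (f : List (Fin q) → F) (σ : Fin q → F) (c : Fin q) :
    Set (List (Fin q)) :=
  {s | s.length = b ∧ f s = σ c ∧ s[0]? = some c ∧ s[t]? ≠ s[2 * t - 1]? ∧ s[b - t]? = s[b - 1]?}

/-- The segmented code over `q` symbols: concatenations of `γ` segments, the first in `S^(c)` and
each following one in `S^(φ d)`, where `d` is the last symbol of its predecessor. The binary code
is the case `φ d = 1 - d`, `c = 0`. -/
def segmentedCode (b t γ : ℕ) (f : List (Fin q) → F) (σ : Fin q → F) (φ : Fin q → Fin q)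
    (c : Fin q) : Set (List (Fin q)) :=
  {x | ∃ us : List (List (Fin q)),
    us.length = γ ∧ IsSegmentChain (markedSegments b t f σ) φ c us ∧ x = us.flatten}

theorem exists_getLast?_of_mem_markedSegments (hu : u ∈ markedSegments b t f σ c) :
    ∃ d, u.getLast? = some d := by
  cases u with
  | nil => simp [markedSegments] at hu
  | cons a l => exact ⟨_, List.getLast?_cons⟩

theorem IsSegmentChain.length_eq (h : IsSegmentChain (markedSegments b t f σ) φ c us) :
    ∀ u ∈ us, u.length = b := by
  induction us generalizing c with
  | nil => simp
  | cons v us ih =>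
    obtain ⟨d, hd⟩ := exists_getLast?_of_mem_markedSegments h.head_mem
    exact List.forall_mem_cons.2 ⟨h.head_mem.1, ih (h.tail hd)⟩

theorem IsSegmentChain.eq_of_getElem?_flatten (ht : 0 < t) (h2t : 2 * t ≤ b)
    (hus : IsSegmentChain (markedSegments b t f σ) φ c us)
    (hzs : List.Forall₂ (IsReceived t) zs us)
    (h_first : zs.flatten[0]? = some d) (h_last : zs.flatten[t - 1]? = some d) : d = c := by
  cases hzs with
  | nil => simp at h_first
  | @cons z v zs vs hz _ =>
    obtain ⟨hv_length, -, hv_head, hv_mark, -⟩ := hus.head_mem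
    have hz_length := hz.length_le_add
    rw [List.flatten_cons, List.getElem?_append_left (by omega)] at h_first h_last
    exact hz.eq_of_getElem?_eq ht hv_head hv_mark h_first h_last

theorem IsSegmentChain.append_ne_of_mem_burstDelBall (ht : 0 < t) (h2t : 2 * t ≤ b)
    (hf : IsSyndrome b t f) (hφ : ∀ d, φ d ≠ d) (hu : u ∈ markedSegments b t f σ c)
    (hus' : IsSegmentChain (markedSegments b t f σ) φ c (u' :: us'))
    (hz' : z' ∈ burstDelBall t u') (hzs' : List.Forall₂ (IsReceived t) zs' us') :
    u ++ w ≠ z' ++ zs'.flatten := by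
  intro h
  have hz'_length := length_add_of_mem_burstDelBall hz'
  obtain ⟨hu_length, hu_syndrome, -, -, hu_ends⟩ := hu
  obtain ⟨hu'_length, hu'_syndrome, -⟩ := hus'.head_mem
  obtain ⟨s, rfl⟩ : z' <+: u :=
    List.prefix_of_prefix_length_le ⟨_, h.symm⟩ (List.prefix_append u w) (by omega)
  have h_rest : zs'.flatten = s ++ w :=
    List.append_cancel_left (h.symm.trans (List.append_assoc z' s w))
  have hs_length : s.length = t := by
    rw [List.length_append] at hu_length
    omega
  have hu_ball : z' ∈ burstDelBall t (z' ++ s) := hs_length ▸ mem_burstDelBall_append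
  obtain rfl : z' ++ s = u' := hf.eq_of_mem_burstDelBall hu_length hu'_length
    (hu_syndrome.trans hu'_syndrome.symm) hu_ball hz'
  obtain ⟨d, hd⟩ := exists_getLast?_of_mem_markedSegments hus'.head_mem
  have hs_last : s[t - 1]? = some d := by
    have hs_ne : s ≠ [] := List.ne_nil_of_length_pos (hs_length ▸ ht)
    rw [← hs_length, ← List.getLast?_eq_getElem?, ← List.getLast?_append_of_ne_nil z' hs_ne, hd]
  have hs_first : s[0]? = some d := by
    have h_first : b - t - z'.length = 0 := by omega
    have h_last : b - 1 - z'.length = t - 1 := by omega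
    rw [List.getElem?_append_right (by omega), List.getElem?_append_right (by omega),
      h_first, h_last] at hu_ends
    exact hu_ends.trans hs_last
  have hd_eq : d = φ d := (hus'.tail hd).eq_of_getElem?_flatten ht h2t hzs'
    (by rw [h_rest, List.getElem?_append_left (by omega), hs_first])
    (by rw [h_rest, List.getElem?_append_left (by omega), hs_last])
  exact hφ d hd_eq.symm

theorem IsSegmentChain.head_eq_of_append_eq {z : List (Fin q)} (ht : 0 < t) (h2t : 2 * t ≤ b)
    (hf : IsSyndrome b t f) (hφ : ∀ d, φ d ≠ d)
    (hus : IsSegmentChain (markedSegments b t f σ) φ c (u :: us))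
    (hus' : IsSegmentChain (markedSegments b t f σ) φ c (u' :: us'))
    (hz : IsReceived t z u) (hz' : IsReceived t z' u')
    (hzs : List.Forall₂ (IsReceived t) zs us) (hzs' : List.Forall₂ (IsReceived t) zs' us')
    (h : z ++ zs.flatten = z' ++ zs'.flatten) : u = u' ∧ z.length = z'.length := by
  obtain ⟨hu_length, hu_syndrome, -⟩ := hus.head_mem
  obtain ⟨hu'_length, hu'_syndrome, -⟩ := hus'.head_mem
  rcases hz with rfl | hz <;> rcases hz' with rfl | hz'
  · have h_length := hu_length.trans hu'_length.symm
    exact ⟨List.append_inj_left h h_length, h_length⟩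
  · exact absurd h (hus'.append_ne_of_mem_burstDelBall ht h2t hf hφ hus.head_mem hz' hzs')
  · exact absurd h.symm (hus.append_ne_of_mem_burstDelBall ht h2t hf hφ hus'.head_mem hz hzs)
  · have h_length : z.length = z'.length := by
      have := length_add_of_mem_burstDelBall hz
      have := length_add_of_mem_burstDelBall hz'
      omega
    obtain rfl := List.append_inj_left h h_length
    exact ⟨hf.eq_of_mem_burstDelBall hu_length hu'_length
      (hu_syndrome.trans hu'_syndrome.symm) hz hz', rfl⟩

theorem IsSegmentChain.eq_of_flatten_eq (ht : 0 < t) (h2t : 2 * t ≤ b) (hf : IsSyndrome b t f)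
    (hφ : ∀ d, φ d ≠ d)
    (hus : IsSegmentChain (markedSegments b t f σ) φ c us)
    (hus' : IsSegmentChain (markedSegments b t f σ) φ c us')
    (hzs : List.Forall₂ (IsReceived t) zs us) (hzs' : List.Forall₂ (IsReceived t) zs' us')
    (h_length : us.length = us'.length) (h : zs.flatten = zs'.flatten) : us = us' := by
  induction us generalizing us' zs zs' c with
  | nil => exact (List.length_eq_zero_iff.1 h_length.symm).symm
  | cons u us ih =>
    obtain ⟨u', us', rfl⟩ := List.exists_cons_of_length_eq_add_one h_length.symm
    obtain _ | ⟨hz, hzs⟩ := hzs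
    obtain _ | ⟨hz', hzs'⟩ := hzs'
    rw [List.flatten_cons, List.flatten_cons] at h
    obtain ⟨rfl, hz_length⟩ :=
      hus.head_eq_of_append_eq ht h2t hf hφ hus' hz hz' hzs hzs' h
    obtain ⟨d, hd⟩ := exists_getLast?_of_mem_markedSegments hus.head_mem
    rw [ih (hus.tail hd) (hus'.tail hd) hzs hzs' (Nat.succ_injective h_length)
      (List.append_inj_right h hz_length)]

end MarkedSegments

theorem stmt0_general {q b t γ : ℕ} (ht : 0 < t) (h2t : 2 * t ≤ b) {F : Type*}
    {f : List (Fin q) → F} (hf : IsSyndrome b t f) {σ : Fin q → F} {φ : Fin q → Fin q}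
    (hφ : ∀ d, φ d ≠ d) {c : Fin q} {x x' : List (Fin q)} (hx : x ∈ segmentedCode b t γ f σ φ c)
    (hx' : x' ∈ segmentedCode b t γ f σ φ c) (hne : x ≠ x') :
    segBall b t γ x ∩ segBall b t γ x' = ∅ := by
  obtain ⟨us, rfl, hus, rfl⟩ := hx
  obtain ⟨us', h_length, hus', rfl⟩ := hx'
  refine Set.eq_empty_iff_forall_notMem.2 fun y ⟨hy, hy'⟩ => hne ?_
  obtain ⟨zs, hzs, rfl⟩ := exists_isReceived_of_mem_segBall hus.length_eq hy
  obtain ⟨zs', hzs', h⟩ := exists_isReceived_of_mem_segBall hus'.length_eq (h_length ▸ hy')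
  rw [hus.eq_of_flatten_eq ht h2t hf hφ hus' hzs hzs' h_length.symm h]

/-- the binary segmented code built from a one-burst-`t`-deletion
syndrome function with fixed first bit and the boundary constraints is a
segmented burst-of-`t`-deletions error-correcting code. -/
theorem stmt0 (b t γ : ℕ) (hb : 0 < b) (ht : 0 < t) (hγ : 0 < γ)
    (h2t : 2 * t < b) (F : Type*) [Fintype F]
    (f : List (Fin 2) → F) (hf : IsSyndrome b t f) (σ : Fin 2 → F) :
    ∀ S : Fin 2 → Set (List (Fin 2)),
      S = (fun c => {s | s.length = b ∧ f s = σ c ∧ s[0]? = some c ∧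
          s[t]? ≠ s[2 * t - 1]? ∧ s[b - t]? = s[b - 1]?}) →
    ∀ C : Set (List (Fin 2)),
      C = {x | ∃ z : Fin γ → List (Fin 2),
          x = (List.ofFn z).flatten ∧
          z ⟨0, hγ⟩ ∈ S 0 ∧
          ∀ i : Fin γ, 0 < i.val → ∀ c : Fin 2,
            (z ⟨i.val - 1, Nat.lt_of_le_of_lt (Nat.pred_le _) i.isLt⟩).getLast?
              = some c →
            z i ∈ S (1 - c)} →
    ∀ x ∈ C, ∀ x' ∈ C, x ≠ x' →
      segBall b t γ x ∩ segBall b t γ x' = ∅ := by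
  rintro _ rfl _ rfl _ ⟨z, rfl, h, h'⟩ _ ⟨z', rfl, k, k'⟩
  exact stmt0_general (φ := (1 - ·)) ht h2t.le hf (by decide)
    ⟨_, List.length_ofFn, isSegmentChain_ofFn hγ h h', rfl⟩
    ⟨_, List.length_ofFn, isSegmentChain_ofFn hγ k k', rfl⟩
end

section
/- Let q > 2 and let b, t, γ be positive integers with 2t < b. Let F be a finite set and let f : Σ_q^b → F be a one-burst-t-deletion syndrome function. Fix σ_0, σ_1, …, σ_{q−1} ∈ F and for each j ∈ {0,…,q−1} define S^(j) = {s ∈ Σ_q^b : f(s) = σ_j, s_1 ≠ j, s_{t+1} ≠ j, s_{2t} ≠ j, s_{b−t+1} = s_b}. Let C ⊆ Σ_q^{bγ} be the set of all concatenations x_1 x_2 ⋯ x_γ such that x_1 ∈ S^(0) and, for each i ∈ [2,γ], x_i ∈ S^(j) where j is the last symbol of x_{i−1}. Then C is a segmented burst-of-t-deletions error-correcting code: for any two distinct x, x′ ∈ C, B^D_{γ,t}(x) ∩ B^D_{γ,t}(x′) = ∅. -/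
/-!
The receiver decodes from left to right. The first `b - t` received symbols lie in the burst
deletion ball of the segment being read, whether or not a burst hit it, so the syndrome determines
that segment. It remains to decide whether `b` or `b - t` symbols belong to it. If these two
readings were both possible, the segment `u` would be followed by `r` in one of them and its
punctured version `w` by `r'` in the other, with `u ++ r = w ++ r'`; then `r'` starts with
`u_{b-t+1} = u_b`. The next segment is chosen so that, even after a burst, it does not start with
the last symbol of `u`.
-/

section Segment

variable {q t : ℕ} {u w w' r r' : List (Fin q)}

/-- The words that can be received for a single transmitted segment `u`: the segment itself, or
the result of one burst of `t` deletions. -/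
def segmentBall (t : ℕ) (u : List (Fin q)) : Set (List (Fin q)) :=
  insert u (burstDelBall t u)

theorem length_of_mem_burstDelBall (hw : w ∈ burstDelBall t u) : w.length = u.length - t := by
  obtain ⟨i, hi, rfl⟩ := hw
  grind

theorem take_append_mem_burstDelBall (ht : t ≤ u.length) (hw : w ∈ segmentBall t u)
    (r : List (Fin q)) : (w ++ r).take (u.length - t) ∈ burstDelBall t u := by
  rcases hw with rfl | hw
  · exact ⟨w.length - t, by omega, by simp [Nat.sub_add_cancel ht]⟩
  · rwa [List.take_left' (length_of_mem_burstDelBall hw)]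

theorem getElem?_zero_append_of_mem_segmentBall (ht : t < u.length) (hw : w ∈ segmentBall t u)
    (r : List (Fin q)) : (w ++ r)[0]? = u[0]? ∨ (w ++ r)[0]? = u[t]? := by
  rcases hw with rfl | ⟨i, hi, rfl⟩
  · exact .inl (List.getElem?_append_left (by omega))
  · rcases Nat.eq_zero_or_pos i with rfl | hi₀
    · exact .inr (by grind)
    · exact .inl (by grind)

theorem getElem?_zero_eq_of_append_eq_append (ht : 0 < t) (hw : w ∈ burstDelBall t u)
    (h : u ++ r = w ++ r') : r'[0]? = u[u.length - t]? := by
  have hlen := length_of_mem_burstDelBall hw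
  obtain ⟨i, hi, -⟩ := hw
  calc r'[0]? = (w ++ r')[u.length - t]? := by
        rw [List.getElem?_append_right hlen.le, hlen, Nat.sub_self]
    _ = (u ++ r)[u.length - t]? := by rw [h]
    _ = u[u.length - t]? := List.getElem?_append_left (by omega)

theorem right_eq_of_append_eq_append (ht : 0 < t) (hw : w ∈ segmentBall t u)
    (hw' : w' ∈ segmentBall t u)
    (hr : r[0]? ≠ u[u.length - t]?) (hr' : r'[0]? ≠ u[u.length - t]?)
    (h : w ++ r = w' ++ r') : r = r' := by
  rcases hw with rfl | hw <;> rcases hw' with rfl | hw'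
  · exact List.append_cancel_left h
  · exact absurd (getElem?_zero_eq_of_append_eq_append ht hw' h) hr'
  · exact absurd (getElem?_zero_eq_of_append_eq_append ht hw h.symm) hr
  · have hlen : w.length = w'.length :=
      (length_of_mem_burstDelBall hw).trans (length_of_mem_burstDelBall hw').symm
    exact (List.append_inj h hlen).2

end Segment

section Segmentation

variable {q b t γ : ℕ} {L : List (List (Fin q))}

theorem seg_flatten_s2 (hL : ∀ u ∈ L, u.length = b) (i : ℕ) (hi : i < L.length) :
    seg b L.flatten i = L[i] := by
  induction L generalizing i with
  | nil => simp at hi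
  | cons u L ih =>
    obtain ⟨hu, hL⟩ := List.forall_mem_cons.mp hL
    cases i with
    | zero => simp [seg, ← hu]
    | succ i =>
      have hdrop : (u ++ L.flatten).drop ((i + 1) * b) = L.flatten.drop (i * b) := by
        rw [Nat.succ_mul, Nat.add_comm, ← List.drop_drop, List.drop_left' hu]
      simpa [seg, hdrop] using ih hL i (by simpa using hi)

theorem exists_forall₂_segmentBall_of_mem_segBall {y : List (Fin q)}
    (hL : ∀ u ∈ L, u.length = b) (hγ : L.length = γ) (hy : y ∈ segBall b t γ L.flatten) :
    ∃ W, List.Forall₂ (· ∈ segmentBall t ·) W L ∧ W.flatten = y := by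
  obtain ⟨z, hz, rfl⟩ := hy
  refine ⟨List.ofFn z, List.forall₂_iff_get.mpr ⟨by simp [hγ], fun i hi hiL => ?_⟩, rfl⟩
  have hzi : z ⟨i, hγ ▸ hiL⟩ ∈ segmentBall t (seg b L.flatten i) := hz _
  simpa [seg_flatten_s2 hL i hiL] using hzi

end Segmentation

section ChainCode

variable {q : ℕ}

/-- The segment `s` may be transmitted right after the segment `p`: it lies in the set `S j`
selected by the last symbol `j` of `p`. -/
def Follows (S : Fin q → Set (List (Fin q))) (p s : List (Fin q)) : Prop :=
  ∀ j, p.getLast? = some j → s ∈ S j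

/-- The code of all concatenations of `γ` segments in which each segment lies in the set selected
by the last symbol of its predecessor. The first segment is chosen from `S j₀`, which is encoded
by putting the one-symbol segment `[j₀]` in front of the chain. -/
def chainCode (S : Fin q → Set (List (Fin q))) (j₀ : Fin q) (γ : ℕ) : Set (List (Fin q)) :=
  {x | ∃ L : List (List (Fin q)),
    L.length = γ ∧ List.IsChain (Follows S) ([j₀] :: L) ∧ x = L.flatten}

theorem chainCode_mono {S T : Fin q → Set (List (Fin q))} (hST : ∀ j, S j ⊆ T j) (j₀ : Fin q)
    (γ : ℕ) : chainCode S j₀ γ ⊆ chainCode T j₀ γ := by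
  rintro x ⟨L, hγ, hL, rfl⟩
  exact ⟨L, hγ, hL.imp fun _ _ h j hj => hST j (h j hj), rfl⟩

theorem flatten_ofFn_mem_chainCode {γ : ℕ} {S : Fin q → Set (List (Fin q))} {j₀ : Fin q}
    {z : Fin γ → List (Fin q)} (hγ : 0 < γ) (hfirst : z ⟨0, hγ⟩ ∈ S j₀)
    (hnext : ∀ i : Fin γ, 0 < i.val → ∀ j,
      (z ⟨i.val - 1, Nat.lt_of_le_of_lt (Nat.pred_le _) i.isLt⟩).getLast? = some j → z i ∈ S j) :
    (List.ofFn z).flatten ∈ chainCode S j₀ γ := by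
  refine ⟨List.ofFn z, List.length_ofFn, ?_, rfl⟩
  rw [List.isChain_cons]
  refine ⟨?_, List.isChain_ofFn.mpr fun i hi => hnext ⟨i + 1, hi⟩ i.succ_pos⟩
  obtain ⟨n, rfl⟩ := Nat.exists_eq_succ_of_ne_zero hγ.ne'
  intro s hs j hj
  obtain rfl : z 0 = s := by simpa using hs
  obtain rfl : j₀ = j := by simpa using hj
  exact hfirst

end ChainCode

section MarkerSegments

variable {q b t : ℕ} {F : Type*} {f : List (Fin q) → F} {σ : Fin q → F}

/-- The segments of syndrome `σ j` that do not start with the marker `j`, even after a burst of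
`t` deletions at the front, and whose last symbol is repeated `t - 1` positions earlier. These are
the sets `S^(j)` of the construction without the condition `s_{2t} ≠ j`. -/
def markerSegments (b t : ℕ) (f : List (Fin q) → F) (σ : Fin q → F) (j : Fin q) :
    Set (List (Fin q)) :=
  {s | s.length = b ∧ f s = σ j ∧ s[0]? ≠ some j ∧ s[t]? ≠ some j ∧ s[b - t]? = s[b - 1]?}

theorem IsSyndrome.eq_of_append_eq_append (hf : IsSyndrome b t f) (htb : t ≤ b)
    {u u' w w' r r' : List (Fin q)} (hu : u.length = b) (hu' : u'.length = b) (hfu : f u = f u')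
    (hw : w ∈ segmentBall t u) (hw' : w' ∈ segmentBall t u') (h : w ++ r = w' ++ r') :
    u = u' := by
  by_contra hne
  have hmem : (w ++ r).take (b - t) ∈ burstDelBall t u :=
    hu ▸ take_append_mem_burstDelBall (hu ▸ htb) hw r
  have hmem' : (w ++ r).take (b - t) ∈ burstDelBall t u' :=
    h ▸ hu' ▸ take_append_mem_burstDelBall (hu' ▸ htb) hw' r'
  exact Set.eq_empty_iff_forall_notMem.mp (hf u u' hu hu' hne hfu) _ ⟨hmem, hmem'⟩

theorem getElem?_zero_flatten_ne_getLast? (htb : t < b) {p : List (Fin q)} (hp : p ≠ [])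
    {L W : List (List (Fin q))} (hL : List.IsChain (Follows (markerSegments b t f σ)) (p :: L))
    (hW : List.Forall₂ (· ∈ segmentBall t ·) W L) : W.flatten[0]? ≠ p.getLast? := by
  rw [List.getLast?_eq_some_getLast hp]
  cases hW with
  | nil => simp
  | @cons w u W L hw hW =>
    obtain ⟨hu, -, hu₀, hut, -⟩ := hL.rel _ (List.getLast?_eq_some_getLast hp)
    rw [List.flatten_cons]
    rcases getElem?_zero_append_of_mem_segmentBall (hu ▸ htb) hw W.flatten with h | h
    · rwa [h]
    · rwa [h]

theorem length_eq_of_isChain_follows (hb : 0 < b) {p : List (Fin q)} (hp : p ≠ [])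
    {L : List (List (Fin q))} (hL : List.IsChain (Follows (markerSegments b t f σ)) (p :: L)) :
    ∀ u ∈ L, u.length = b := by
  induction L generalizing p with
  | nil => simp
  | cons u L ih =>
    obtain ⟨hpu, huL⟩ := List.isChain_cons_cons.mp hL
    have hu : u.length = b := (hpu _ (List.getLast?_eq_some_getLast hp)).1
    exact List.forall_mem_cons.mpr ⟨hu, ih (List.ne_nil_of_length_pos (hu ▸ hb)) huL⟩

theorem IsSyndrome.eq_of_flatten_eq (hf : IsSyndrome b t f) (ht : 0 < t) (htb : t < b)
    {p : List (Fin q)} (hp : p ≠ []) {L L' W W' : List (List (Fin q))}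
    (hL : List.IsChain (Follows (markerSegments b t f σ)) (p :: L))
    (hL' : List.IsChain (Follows (markerSegments b t f σ)) (p :: L'))
    (hW : List.Forall₂ (· ∈ segmentBall t ·) W L)
    (hW' : List.Forall₂ (· ∈ segmentBall t ·) W' L')
    (hlen : L.length = L'.length) (h : W.flatten = W'.flatten) : L = L' := by
  induction hW generalizing p L' W' with
  | nil => exact (List.length_eq_zero_iff.mp hlen.symm).symm
  | @cons w u W L hw hW ih =>
    cases hW' with
    | nil => simp at hlen
    | @cons w' u' W' L' hw' hW' =>
      obtain ⟨hpu, huL⟩ := List.isChain_cons_cons.mp hL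
      obtain ⟨hpu', huL'⟩ := List.isChain_cons_cons.mp hL'
      have hlast := List.getLast?_eq_some_getLast hp
      obtain ⟨hu, hfu, -, -, hend⟩ := hpu _ hlast
      obtain ⟨hu', hfu', -⟩ := hpu' _ hlast
      obtain rfl : u = u' :=
        hf.eq_of_append_eq_append htb.le hu hu' (hfu.trans hfu'.symm) hw hw' h
      have hu_ne : u ≠ [] := List.ne_nil_of_length_pos (by omega)
      have hlast_u : u[u.length - t]? = u.getLast? := by
        rw [List.getLast?_eq_getElem?, hu, hend]
      have htail : W.flatten = W'.flatten :=
        right_eq_of_append_eq_append ht hw hw'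
          (hlast_u ▸ getElem?_zero_flatten_ne_getLast? htb hu_ne huL hW)
          (hlast_u ▸ getElem?_zero_flatten_ne_getLast? htb hu_ne huL' hW') h
      exact congrArg (u :: ·) (ih hu_ne huL huL' hW' (by simpa using hlen) htail)

theorem stmt2_general (hf : IsSyndrome b t f) (ht : 0 < t) (htb : t < b)
    {S : Fin q → Set (List (Fin q))} (hS : ∀ j, S j ⊆ markerSegments b t f σ j) (j₀ : Fin q)
    (γ : ℕ) : (chainCode S j₀ γ).PairwiseDisjoint (segBall b t γ) := by
  refine Set.PairwiseDisjoint.subset ?_ (chainCode_mono hS j₀ γ)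
  rintro x ⟨L, hγ, hL, rfl⟩ x' ⟨L', hγ', hL', rfl⟩ hne
  refine Set.disjoint_left.mpr fun y hy hy' => hne ?_
  have hj₀ : [j₀] ≠ [] := List.cons_ne_nil _ _
  have hb : 0 < b := ht.trans htb
  obtain ⟨W, hW, rfl⟩ :=
    exists_forall₂_segmentBall_of_mem_segBall (length_eq_of_isChain_follows hb hj₀ hL) hγ hy
  obtain ⟨W', hW', hWW'⟩ :=
    exists_forall₂_segmentBall_of_mem_segBall (length_eq_of_isChain_follows hb hj₀ hL') hγ' hy'
  rw [hf.eq_of_flatten_eq ht htb hj₀ hL hL' hW hW' (hγ.trans hγ'.symm) hWW'.symm]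

end MarkerSegments

/-- the `q`-ary (`q > 2`) segmented code built from a one-burst-`t`-
deletion syndrome function is a segmented burst-of-`t`-deletions ECC. -/
theorem stmt2 (q b t γ : ℕ) (hq : 2 < q) (hb : 0 < b) (ht : 0 < t) (hγ : 0 < γ)
    (h2t : 2 * t < b) (F : Type*) [Fintype F]
    (f : List (Fin q) → F) (hf : IsSyndrome b t f) (σ : Fin q → F) :
    ∀ S : Fin q → Set (List (Fin q)),
      S = (fun j => {s | s.length = b ∧ f s = σ j ∧ s[0]? ≠ some j ∧
          s[t]? ≠ some j ∧ s[2 * t - 1]? ≠ some j ∧ s[b - t]? = s[b - 1]?}) →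
    ∀ C : Set (List (Fin q)),
      C = {x | ∃ z : Fin γ → List (Fin q),
          x = (List.ofFn z).flatten ∧
          z ⟨0, hγ⟩ ∈ S ⟨0, by omega⟩ ∧
          ∀ i : Fin γ, 0 < i.val → ∀ j : Fin q,
            (z ⟨i.val - 1, Nat.lt_of_le_of_lt (Nat.pred_le _) i.isLt⟩).getLast?
              = some j →
            z i ∈ S j} →
    ∀ x ∈ C, ∀ x' ∈ C, x ≠ x' →
      segBall b t γ x ∩ segBall b t γ x' = ∅ := by
  rintro S hS C rfl x ⟨z, rfl, hz₀, hz⟩ x' ⟨z', rfl, hz₀', hz'⟩ hne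
  have hsub : ∀ j, S j ⊆ markerSegments b t f σ j :=
    hS ▸ fun _ _ ⟨hs, hfs, hs₀, hst, _, hend⟩ => ⟨hs, hfs, hs₀, hst, hend⟩
  exact (stmt2_general hf ht (by omega) hsub _ γ (flatten_ofFn_mem_chainCode hγ hz₀ hz)
    (flatten_ofFn_mem_chainCode hγ hz₀' hz') hne).inter_eq
end

section
/- Let b, t, γ be positive integers with 2t < b, let F be a finite set and f : Σ_2^b → F a one-burst-t-deletion syndrome function. Let x = x_1 x_2 ⋯ x_γ ∈ Σ_2^{bγ} be such that every segment satisfies x_{i,t+1} ≠ x_{i,2t} and x_{i,b−t+1} = x_{i,b}, and x_{i,1} ≠ x_{i−1,b} for every i ∈ [2,γ]. Let y be obtained from x by deleting, from each segment i, either no symbols (d_i = 0) or one burst of t consecutive symbols (d_i = t). Fix i ∈ [1,γ], set p_i = (i−1)b − Σ_{j<i} d_j, and assume p_i + b ≤ |y|. If f(y(p_i+1 : p_i+b)) = f(x_i), then d_i = 0 and y(p_i+1 : p_i+b) = x_i (so the (i+1)-th segment of x starts at position p_i + b + 1 of y). -/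
/-!
Suppose segment `i` lost a burst. The window of length `b` at `p` then consists of the remainder
of segment `i` and the first `t` symbols of the next received block. Deleting those `t` symbols
again shows that the window and `x_i` have a common burst-deleted subsequence, so equal syndromes
force them to be equal. Hence the next block begins with the last `t` symbols of `x_i`, and since
`x_{i,b-t+1} = x_{i,b}`, its symbols `1` and `t` (counted from `1`) both equal `x_{i,b}`. This is
impossible: either the next block still starts with `x_{i+1,1} ≠ x_{i,b}`, or it is `x_{i+1}`
without its first `t` symbols, and then its symbols `1` and `t` are the distinct `x_{i+1,t+1}` and
`x_{i+1,2t}`.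
-/

section Concatenation

variable {α : Type*} {γ : ℕ} (z : Fin γ → List α)

theorem flatten_drop_ofFn {n : ℕ} (hn : n < γ) :
    ((List.ofFn z).drop n).flatten = z ⟨n, hn⟩ ++ ((List.ofFn z).drop (n + 1)).flatten := by
  rw [List.drop_eq_getElem_cons (by simpa using hn), List.flatten_cons, List.getElem_ofFn]

theorem drop_sum_length_flatten_ofFn (i : Fin γ) :
    (List.ofFn z).flatten.drop (∑ j with j < i, (z j).length) =
      ((List.ofFn z).drop i).flatten := by
  have hsum : ∑ j with j < i, (z j).length = (((List.ofFn z).map List.length).take i).sum := by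
    simp only [List.map_ofFn, List.sum_take_ofFn, Fin.lt_def, Function.comp_apply]
  rw [hsum, List.drop_sum_flatten]

theorem take_drop_flatten_ofFn_of_length_add {b : ℕ} {d : Fin γ → ℕ}
    (h : ∀ j, (z j).length + d j = b) (i : Fin γ) :
    ((List.ofFn z).flatten.drop (i * b - ∑ j with j < i, d j)).take b =
      z i ++ ((List.ofFn z).drop (i + 1)).flatten.take (d i) := by
  have hsum : ∑ j with j < i, (z j).length + ∑ j with j < i, d j = i * b := by
    rw [← Finset.sum_add_distrib, Finset.sum_congr rfl fun j _ => h j, Finset.sum_const,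
      Finset.filter_gt_eq_Iio, Fin.card_Iio, smul_eq_mul]
  rw [← Nat.eq_sub_of_add_eq hsum, drop_sum_length_flatten_ofFn, flatten_drop_ofFn z i.isLt,
    ← h i, List.take_length_add_append]

theorem exists_take_flatten_drop_ofFn {n t : ℕ} (ht : 0 < t) (hz : ∀ j, t ≤ (z j).length)
    (hn : t ≤ ((List.ofFn z).drop n).flatten.length) :
    ∃ h : n < γ, ((List.ofFn z).drop n).flatten.take t = (z ⟨n, h⟩).take t := by
  have h : n < γ := by
    by_contra! hle
    rw [List.drop_of_length_le (by simpa using hle), List.flatten_nil, List.length_nil] at hn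
    omega
  exact ⟨h, by rw [flatten_drop_ofFn z h, List.take_append_of_le_length (hz _)]⟩

end Concatenation

section BurstDeletion

variable {q t : ℕ}

theorem length_seg {b i : ℕ} {x : List (Fin q)} (h : (i + 1) * b ≤ x.length) :
    (seg b x i).length = b := by
  rw [add_one_mul] at h
  rw [seg, List.length_take, List.length_drop]
  omega

theorem length_add_of_mem_burstDelBall_s4 {v w : List (Fin q)} (h : w ∈ burstDelBall t v) :
    w.length + t = v.length := by
  obtain ⟨k, hk, rfl⟩ := h
  rw [List.length_append, List.length_take, List.length_drop]
  omega

theorem left_mem_burstDelBall_append (u v : List (Fin q)) :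
    u ∈ burstDelBall v.length (u ++ v) :=
  ⟨u.length, by simp, by simp [← List.length_append]⟩

theorem eq_drop_or_getElem?_zero_eq_of_mem_burstDelBall {v w : List (Fin q)}
    (h : w ∈ burstDelBall t v) : w = v.drop t ∨ w[0]? = v[0]? := by
  obtain ⟨k, hk, rfl⟩ := h
  rcases Nat.eq_zero_or_pos k with rfl | hpos
  · left
    simp
  · right
    rw [List.getElem?_append_left (by rw [List.length_take]; omega),
      List.getElem?_take_of_lt hpos]

theorem getElem?_pred_ne_of_getElem?_zero_eq {v w : List (Fin q)} {c : Option (Fin q)}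
    (hw : w = v ∨ w ∈ burstDelBall t v) (hv : v[t]? ≠ v[2 * t - 1]?) (hc : v[0]? ≠ c)
    (h0 : w[0]? = c) : w[t - 1]? ≠ c := by
  rcases hw with rfl | hw
  · exact absurd h0 hc
  rcases eq_drop_or_getElem?_zero_eq_of_mem_burstDelBall hw with rfl | hzero
  · rw [List.getElem?_drop, add_zero] at h0
    rw [List.getElem?_drop, show t + (t - 1) = 2 * t - 1 by omega, ← h0]
    exact hv.symm
  · exact absurd (hzero.symm.trans h0) hc

end BurstDeletion

namespace IsSyndrome

variable {q b t : ℕ} {F : Type*} {f : List (Fin q) → F}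

theorem eq_of_mem_burstDelBall_s4 (hf : IsSyndrome b t f) {u v w : List (Fin q)}
    (hu : u.length = b) (hv : v.length = b) (hfuv : f u = f v)
    (hwu : w ∈ burstDelBall t u) (hwv : w ∈ burstDelBall t v) : u = v := by
  by_contra hne
  exact Set.notMem_empty w (hf u v hu hv hne hfuv ▸ ⟨hwu, hwv⟩)

theorem append_eq_of_mem_burstDelBall (hf : IsSyndrome b t f) {u w r : List (Fin q)}
    (hu : u.length = b) (hw : w ∈ burstDelBall t u) (hr : r.length = t)
    (hfu : f (w ++ r) = f u) : w ++ r = u := by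
  have hwr : (w ++ r).length = b := by
    rw [List.length_append, hr, length_add_of_mem_burstDelBall_s4 hw, hu]
  exact hf.eq_of_mem_burstDelBall_s4 hwr hu hfu (hr ▸ left_mem_burstDelBall_append w r) hw

theorem apply_append_take_ne (hf : IsSyndrome b t f) (ht : 0 < t) {u v w w' : List (Fin q)}
    (hu : u.length = b) (hw : w ∈ burstDelBall t u) (hw' : w' = v ∨ w' ∈ burstDelBall t v)
    (htw' : t ≤ w'.length) (hub : u[b - t]? = u[b - 1]?) (hv : v[t]? ≠ v[2 * t - 1]?)
    (huv : v[0]? ≠ u[b - 1]?) : f (w ++ w'.take t) ≠ f u := by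
  intro hfu
  have hlen := length_add_of_mem_burstDelBall_s4 hw
  have heq : w ++ w'.take t = u :=
    hf.append_eq_of_mem_burstDelBall hu hw (List.length_take_of_le htw') hfu
  have hsuffix : ∀ k < t, w'[k]? = u[b - t + k]? := by
    intro k hk
    rw [← heq, List.getElem?_append_right (by omega), List.getElem?_take_of_lt (by omega)]
    congr 1
    omega
  have hfirst : w'[0]? = u[b - 1]? := (hsuffix 0 ht).trans hub
  have hlast : w'[t - 1]? = u[b - 1]? := by
    rw [hsuffix (t - 1) (by omega)]
    congr 1
    omega
  exact getElem?_pred_ne_of_getElem?_zero_eq hw' hv huv hfirst hlast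

end IsSyndrome

theorem stmt4_general {q b t γ : ℕ} (ht : 0 < t) (h2t : 2 * t < b) {F : Type*}
    {f : List (Fin q) → F} (hf : IsSyndrome b t f)
    {x : List (Fin q)} (hx : x.length = b * γ)
    (hseg1 : ∀ i : Fin γ, (seg b x i)[t]? ≠ (seg b x i)[2 * t - 1]?)
    (hseg2 : ∀ i : Fin γ, (seg b x i)[b - t]? = (seg b x i)[b - 1]?)
    (hseg3 : ∀ i : Fin γ, 0 < i.val →
      (seg b x i)[0]? ≠ (seg b x (i.val - 1))[b - 1]?)
    {d : Fin γ → ℕ} (hd : ∀ i, d i = 0 ∨ d i = t)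
    {z : Fin γ → List (Fin q)}
    (hz0 : ∀ i, d i = 0 → z i = seg b x i)
    (hzt : ∀ i, d i = t → z i ∈ burstDelBall t (seg b x i))
    {y : List (Fin q)} (hy : y = (List.ofFn z).flatten)
    {i : Fin γ} {p : ℕ}
    (hp : p = i.val * b - ∑ j ∈ Finset.univ.filter (fun j : Fin γ => j < i), d j)
    (hpb : p + b ≤ y.length)
    (hfy : f ((y.drop p).take b) = f (seg b x i)) :
    d i = 0 ∧ (y.drop p).take b = seg b x i := by
  have hseg : ∀ j : Fin γ, (seg b x j).length = b := fun j =>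
    length_seg (hx ▸ mul_comm b γ ▸ Nat.mul_le_mul_right b j.isLt)
  have hlen : ∀ j, (z j).length + d j = b := fun j => (hd j).elim
    (fun h => by rw [hz0 j h, hseg, h, add_zero])
    (fun h => by rw [h, length_add_of_mem_burstDelBall_s4 (hzt j h), hseg])
  have htlen : ∀ j, t ≤ (z j).length := fun j => by have := hlen j; have := hd j; omega
  have hwindow : (y.drop p).take b = z i ++ ((List.ofFn z).drop (i + 1)).flatten.take (d i) := by
    rw [hy, hp, take_drop_flatten_ofFn_of_length_add z hlen i]
  rcases hd i with hdi | hdi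
  · exact ⟨hdi, by rw [hwindow, hdi, List.take_zero, List.append_nil, hz0 i hdi]⟩
  have hrest : t ≤ ((List.ofFn z).drop (i + 1)).flatten.length := by
    have hwlen := congrArg List.length hwindow
    rw [List.length_take, List.length_drop, List.length_append, List.length_take] at hwlen
    have := hlen i
    omega
  obtain ⟨hi, hnext⟩ := exists_take_flatten_drop_ofFn z ht htlen hrest
  rw [hwindow, hdi, hnext] at hfy
  exact absurd hfy <| hf.apply_append_take_ne ht (hseg i) (hzt i hdi)
    ((hd _).imp (hz0 _) (hzt _)) (htlen _) (hseg2 i) (hseg1 _) (hseg3 ⟨i + 1, hi⟩ i.val.succ_pos)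

/-- binary decoding lemma.  If the windowed syndrome matches the
segment syndrome, then the segment suffered no deletion and is read off exactly,
so the next segment starts at position `p_i + b + 1`. -/
theorem stmt4 (b t γ : ℕ) (hb : 0 < b) (ht : 0 < t) (hγ : 0 < γ)
    (h2t : 2 * t < b) (F : Type*) [Fintype F]
    (f : List (Fin 2) → F) (hf : IsSyndrome b t f)
    (x : List (Fin 2)) (hx : x.length = b * γ)
    (hseg1 : ∀ i : Fin γ, (seg b x i)[t]? ≠ (seg b x i)[2 * t - 1]?)
    (hseg2 : ∀ i : Fin γ, (seg b x i)[b - t]? = (seg b x i)[b - 1]?)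
    (hseg3 : ∀ i : Fin γ, 0 < i.val →
      (seg b x i)[0]? ≠ (seg b x (i.val - 1))[b - 1]?)
    (d : Fin γ → ℕ) (hd : ∀ i, d i = 0 ∨ d i = t)
    (z : Fin γ → List (Fin 2))
    (hz0 : ∀ i, d i = 0 → z i = seg b x i)
    (hzt : ∀ i, d i = t → z i ∈ burstDelBall t (seg b x i))
    (y : List (Fin 2)) (hy : y = (List.ofFn z).flatten)
    (i : Fin γ) (p : ℕ)
    (hp : p = i.val * b - ∑ j ∈ Finset.univ.filter (fun j : Fin γ => j < i), d j)
    (hpb : p + b ≤ y.length)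
    (hfy : f ((y.drop p).take b) = f (seg b x i)) :
    d i = 0 ∧ (y.drop p).take b = seg b x i :=
  stmt4_general ht h2t hf hx hseg1 hseg2 hseg3 hd hz0 hzt hy hp hpb hfy
end

section
/- Let b, t be positive integers with 2t ≤ b. Let u, v ∈ Σ_2^b satisfy u_{b−t+1} = u_b, v_1 ≠ u_b, and v_{t+1} ≠ v_{2t}. Then for every w ∈ B_t^D(v), the first t symbols of w differ from the last t symbols of u, i.e., w(1:t) ≠ u(b−t+1 : b). -/
/-!
Deleting a burst from `v` either removes its first `t` symbols or leaves its first symbol in place.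
If the first `t` symbols of the result were the last `t` symbols of `u`, they would start and end
with the same symbol `a`, the last one of `u`. In the first case they are `v_{t+1}, …, v_{2t}`,
whose end symbols differ; in the second they start with `v_1 ≠ a`. (Symbols are numbered from 1
here, but list indices start at 0.)
-/

theorem eq_drop_or_head?_eq_of_mem_burstDelBall {q t : ℕ} {v w : List (Fin q)}
    (hw : w ∈ burstDelBall t v) : w = v.drop t ∨ w.head? = v.head? := by
  obtain ⟨i, -, rfl⟩ := hw
  rcases i with _ | i
  · left
    rw [List.take_zero, List.nil_append, Nat.zero_add]
  · right
    cases v <;> simp only [List.take_nil, List.drop_nil, List.append_nil, List.take_succ_cons,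
      List.cons_append, List.head?_cons]

theorem stmt6_general {q t : ℕ} (ht : 0 < t) {u v : List (Fin q)}
    (hu : t ≤ u.length) (hv : 2 * t ≤ v.length)
    (hu_ends : u[u.length - t] = u[u.length - 1]) (hv_first : v[0] ≠ u[u.length - 1])
    (hv_ends : v[t] ≠ v[2 * t - 1]) :
    ∀ w ∈ burstDelBall t v, w.take t ≠ u.drop (u.length - t) := by
  intro w hw hwu
  have symbol_eq (k : ℕ) (hk : k < t) : w[k]? = some u[u.length - t + k] := by
    rw [← List.getElem?_take_of_lt hk, hwu, List.getElem?_drop, List.getElem?_eq_getElem]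
  have first_eq : w[0]? = some u[u.length - 1] := by
    simpa only [Nat.add_zero, hu_ends] using symbol_eq 0 ht
  rcases eq_drop_or_head?_eq_of_mem_burstDelBall hw with rfl | hhead
  · have last_eq : (v.drop t)[t - 1]? = some u[u.length - 1] := by
      simpa only [show u.length - t + (t - 1) = u.length - 1 by omega]
        using symbol_eq (t - 1) (by omega)
    have ends_eq : v[t]? = v[2 * t - 1]? := by
      simpa only [List.getElem?_drop, Nat.add_zero, show t + (t - 1) = 2 * t - 1 by omega]
        using first_eq.trans last_eq.symm
    apply hv_ends
    rwa [List.getElem?_eq_getElem (by omega), List.getElem?_eq_getElem (by omega),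
      Option.some_inj] at ends_eq
  · apply hv_first
    rwa [← List.head?_eq_getElem?, hhead, List.head?_eq_getElem?,
      List.getElem?_eq_getElem (by omega), Option.some_inj] at first_eq

/-- for binary sequences with the boundary constraints, the first
`t` symbols of any sequence obtained from `v` by one burst of `t` deletions
differ from the last `t` symbols of `u`. -/
theorem stmt6 (b t : ℕ) (hb : 0 < b) (ht : 0 < t) (h2t : 2 * t ≤ b)
    (u v : List (Fin 2)) (hu : u.length = b) (hv : v.length = b)
    (hu2 : u[b - t]? = u[b - 1]?) (hv1 : v[0]? ≠ u[b - 1]?)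
    (hv2 : v[t]? ≠ v[2 * t - 1]?) :
    ∀ w ∈ burstDelBall t v, w.take t ≠ u.drop (b - t) := by
  subst hu
  refine stmt6_general ht (by omega) (by omega) ?_ ?_ ?_ <;> grind
end
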